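/- The revenue function Rev(x) = x·(1 − F(x)) satisfies Rev(x) = x for x ∈ [0, b), Rev(x) = b + (1 − b)·g((x − b)/(1 − b)) for x ∈ [b, 1], Rev(x) = 1 + b − x for x ∈ (1, 1 + b], and Rev(x) = 0 for x > 1 + b. Moreover Rev(x) ≥ b for every x ∈ [b, 1], Rev(y) < b for every y ∈ [0, ∞) \ [b, 1], and Rev has a unique maximizer on [0, ∞), namely x_r* = b + (1 − b)·x*, where x* is the unique point in ∩_{k≥0} [a_k, b_k]. -/

import Mathlib

open Set MeasureTheory

/-- The basic mollifier `u₀(x) = exp(−1/(x(1/3 − x)))` on `(0, 1/3)`, `0` elsewhere. -/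
noncomputable def u0 (x : ℝ) : ℝ :=
  if x ∈ Set.Ioo (0 : ℝ) (1 / 3) then Real.exp (-(1 / (x * (1 / 3 - x)))) else 0

/-- The normalized primitive `u(x) = (∫₀^{1/3} u₀)⁻¹ · ∫_{−∞}^x u₀`. -/
noncomputable def uFn (x : ℝ) : ℝ :=
  (∫ t in (0 : ℝ)..(1 / 3), u0 t)⁻¹ * ∫ t in Set.Iic x, u0 t

/-- `L₁ = sup_x |u'(x)|`. -/
noncomputable def L1 : ℝ := ⨆ x : ℝ, |deriv uFn x|

/-- The bump function `B`. -/
noncomputable def bump (x : ℝ) : ℝ :=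
  if x < 0 then 0
  else if x ≤ 1 / 3 then uFn x
  else if x < 2 / 3 then 1
  else if x ≤ 1 then uFn (1 - x)
  else 0

/-- The bump function rescaled to the interval `[a, b]`. -/
noncomputable def bumpOn (a b x : ℝ) : ℝ := bump ((x - a) / (b - a))

/-- The interval widths: `w 0 = 1` and `w k = 3^(−k!)` for `k ≥ 1`. -/
noncomputable def wSeq : ℕ → ℝ := fun k => if k = 0 then 1 else (3 : ℝ) ^ (-(k.factorial : ℤ))

/-- `a, b : ℕ → ℝ` describe an admissible nested sequence of intervals:
`[a₀,b₀] = [0,1]` and `[a_{k+1}, b_{k+1}]` is a subinterval of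
`[a_k + w_k/3, b_k − w_k/3]` of length `w_{k+1}`. -/
def IsNestedTower (a b : ℕ → ℝ) : Prop :=
  a 0 = 0 ∧ b 0 = 1 ∧
  ∀ k : ℕ, a k + wSeq k / 3 ≤ a (k + 1) ∧ b (k + 1) ≤ b k - wSeq k / 3 ∧
    b (k + 1) - a (k + 1) = wSeq (k + 1)

/-- The bump tower `f(x) = c_f·Σ_{k=0}^∞ w_k^m·B_{[a_k,b_k]}(x)`. -/
noncomputable def towerFn (m : ℕ) (cf : ℝ) (a b : ℕ → ℝ) (x : ℝ) : ℝ :=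
  cf * ∑' k : ℕ, wSeq k ^ m * bumpOn (a k) (b k) x

/-- `g = f/(1+f)`, the normalization of a nonnegative function `f` to `[0,1)`. -/
noncomputable def gFn (f : ℝ → ℝ) (x : ℝ) : ℝ := f x / (1 + f x)

/-- The noise distribution function built from `f` with parameter `β`. -/
noncomputable def cdfF (f : ℝ → ℝ) (β : ℝ) (x : ℝ) : ℝ :=
  if x < β then 0
  else if x ≤ 1 then 1 - β / x - (1 - β) / x * gFn f ((x - β) / (1 - β))
  else if x ≤ 1 + β then 2 - (1 + β) / x
  else 1

/-!
On `[β, 1]` the revenue is an increasing affine function of `gFn f` in the rescaled variable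
`z = (x − β) / (1 − β)`, hence at least `β`; outside `[β, 1]` it is `x`, `1 + β − x` or `0`, hence
below `β`. As `t ↦ t / (1 + t)` is strictly increasing, maximizing the revenue amounts to
maximizing `f` on `[0, 1]`. For the bump tower, every bump equals `1` at the point common to all
intervals, since the next interval lies in the plateau of the bump; at any other point some bump
vanishes, and since no bump exceeds `1` the series is strictly smaller.
-/

theorem u0_nonneg (x : ℝ) : 0 ≤ u0 x := by
  unfold u0
  split_ifs
  exacts [(Real.exp_pos _).le, le_rfl]

theorem u0_le_one (x : ℝ) : u0 x ≤ 1 := by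
  unfold u0
  split_ifs with hx
  · have hpos : 0 < x * (1 / 3 - x) := mul_pos hx.1 (sub_pos.2 hx.2)
    exact Real.exp_le_one_iff.2 (neg_nonpos.2 (one_div_pos.2 hpos).le)
  · exact zero_le_one

theorem support_u0 : Function.support u0 = Ioo 0 (1 / 3) := by
  ext x
  simp [u0, Real.exp_ne_zero]

theorem measurable_u0 : Measurable u0 :=
  Measurable.ite measurableSet_Ioo (by fun_prop) measurable_const

theorem integrable_u0 : Integrable u0 := by
  refine (integrableOn_iff_integrable_of_support_subset support_u0.subset).1 ?_
  refine Measure.integrableOn_of_bounded (M := 1) (by simp) measurable_u0.aestronglyMeasurable ?_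
  refine Filter.Eventually.of_forall fun x => ?_
  rw [Real.norm_of_nonneg (u0_nonneg x)]
  exact u0_le_one x

theorem integral_u0_pos : 0 < ∫ t, u0 t := by
  rw [integral_pos_iff_support_of_nonneg u0_nonneg integrable_u0, support_u0]
  simp

theorem uFn_eq (x : ℝ) : uFn x = (∫ t, u0 t)⁻¹ * ∫ t in Iic x, u0 t := by
  rw [uFn, intervalIntegral.integral_eq_integral_of_support_subset
    (support_u0.trans_subset Ioo_subset_Ioc_self)]

theorem uFn_mem_Icc (x : ℝ) : uFn x ∈ Icc 0 1 := by
  rw [uFn_eq]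
  refine ⟨mul_nonneg (inv_nonneg.2 integral_u0_pos.le) (integral_nonneg u0_nonneg), ?_⟩
  rw [inv_mul_le_iff₀ integral_u0_pos, mul_one]
  exact setIntegral_le_integral integrable_u0 (Filter.Eventually.of_forall u0_nonneg)

theorem uFn_eq_one {x : ℝ} (hx : 1 / 3 ≤ x) : uFn x = 1 := by
  have hsupp : Function.support u0 ⊆ Iic x :=
    support_u0.trans_subset (Ioo_subset_Iio_self.trans fun _ ht => (mem_Iio.1 ht).le.trans hx)
  have hfull : ∫ t in Iic x, u0 t = ∫ t, u0 t :=
    setIntegral_eq_integral_of_forall_compl_eq_zero fun _ ht =>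
      Function.notMem_support.1 fun h => ht (hsupp h)
  rw [uFn_eq, hfull, inv_mul_cancel₀ integral_u0_pos.ne']

theorem bump_mem_Icc (x : ℝ) : bump x ∈ Icc 0 1 := by
  unfold bump
  split_ifs
  exacts [⟨le_rfl, zero_le_one⟩, uFn_mem_Icc _, ⟨zero_le_one, le_rfl⟩, uFn_mem_Icc _,
    ⟨le_rfl, zero_le_one⟩]

theorem bump_eq_one {x : ℝ} (hx : x ∈ Icc (1 / 3) (2 / 3)) : bump x = 1 := by
  obtain ⟨hx₁, hx₂⟩ := hx
  unfold bump
  split_ifs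
  · linarith
  · exact uFn_eq_one hx₁
  · rfl
  · exact uFn_eq_one (by linarith)
  · linarith

theorem bump_eq_zero {x : ℝ} (hx : x ∉ Icc 0 1) : bump x = 0 := by
  rw [mem_Icc, not_and_or, not_le, not_le] at hx
  unfold bump
  split_ifs <;> first | rfl | (exfalso; rcases hx with hx | hx <;> linarith)

section BumpOn

variable {a b x : ℝ}

theorem bumpOn_eq_one (hab : a < b) (hx : x ∈ Icc (a + (b - a) / 3) (b - (b - a) / 3)) :
    bumpOn a b x = 1 := by
  have hlen : 0 < b - a := sub_pos.2 hab
  apply bump_eq_one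
  rw [mem_Icc, le_div_iff₀ hlen, div_le_iff₀ hlen]
  constructor <;> linarith [hx.1, hx.2]

theorem bumpOn_eq_zero (hab : a < b) (hx : x ∉ Icc a b) : bumpOn a b x = 0 := by
  have hlen : 0 < b - a := sub_pos.2 hab
  refine bump_eq_zero fun h => hx ?_
  rw [mem_Icc, le_div_iff₀ hlen, div_le_iff₀ hlen] at h
  constructor <;> linarith [h.1, h.2]

end BumpOn

theorem wSeq_pos (k : ℕ) : 0 < wSeq k := by
  unfold wSeq
  split_ifs <;> positivity

theorem wSeq_le_geometric (k : ℕ) : wSeq k ≤ (1 / 3) ^ k := by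
  rcases eq_or_ne k 0 with rfl | hk
  · simp [wSeq]
  · rw [wSeq, if_neg hk, zpow_neg, zpow_natCast, one_div, inv_pow]
    gcongr
    exacts [by norm_num, k.self_le_factorial]

theorem summable_wSeq_pow {m : ℕ} (hm : 1 ≤ m) : Summable fun k => wSeq k ^ m := by
  refine .of_nonneg_of_le (fun k => pow_nonneg (wSeq_pos k).le m) (fun k => ?_)
    (summable_geometric_of_lt_one (r := (1 / 3 : ℝ)) (by norm_num) (by norm_num))
  have hw : wSeq k ≤ 1 := (wSeq_le_geometric k).trans (pow_le_one₀ (by norm_num) (by norm_num))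
  exact (pow_le_of_le_one (wSeq_pos k).le hw (by lia)).trans (wSeq_le_geometric k)

theorem wSeq_pow_mul_bumpOn_nonneg (m k : ℕ) (a b x : ℝ) : 0 ≤ wSeq k ^ m * bumpOn a b x :=
  mul_nonneg (pow_nonneg (wSeq_pos k).le m) (bump_mem_Icc _).1

theorem wSeq_pow_mul_bumpOn_le (m k : ℕ) (a b x : ℝ) : wSeq k ^ m * bumpOn a b x ≤ wSeq k ^ m :=
  mul_le_of_le_one_right (pow_nonneg (wSeq_pos k).le m) (bump_mem_Icc _).2

section Tower

variable {m : ℕ} {cf : ℝ} {a b : ℕ → ℝ}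

theorem towerFn_nonneg (hcf : 0 ≤ cf) (x : ℝ) : 0 ≤ towerFn m cf a b x :=
  mul_nonneg hcf (tsum_nonneg fun k => wSeq_pow_mul_bumpOn_nonneg m k (a k) (b k) x)

namespace IsNestedTower

theorem length_eq (hab : IsNestedTower a b) (k : ℕ) : b k - a k = wSeq k := by
  cases k with
  | zero => simp [hab.1, hab.2.1, wSeq]
  | succ k => exact (hab.2.2 k).2.2

theorem left_lt_right (hab : IsNestedTower a b) (k : ℕ) : a k < b k :=
  sub_pos.1 (hab.length_eq k ▸ wSeq_pos k)

theorem iInter_subset_Icc_zero_one (hab : IsNestedTower a b) :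
    ⋂ k, Icc (a k) (b k) ⊆ Icc 0 1 := by
  simpa only [hab.1, hab.2.1] using iInter_subset (fun k => Icc (a k) (b k)) 0

theorem towerFn_of_mem_iInter (hab : IsNestedTower a b) {x : ℝ}
    (hx : x ∈ ⋂ k, Icc (a k) (b k)) : towerFn m cf a b x = cf * ∑' k, wSeq k ^ m := by
  have hbump : ∀ k, bumpOn (a k) (b k) x = 1 := fun k => by
    obtain ⟨ha, hb, -⟩ := hab.2.2 k
    obtain ⟨hax, hxb⟩ := mem_iInter.1 hx (k + 1)
    refine bumpOn_eq_one (hab.left_lt_right k) ?_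
    rw [hab.length_eq k]
    exact ⟨ha.trans hax, hxb.trans hb⟩
  simp only [towerFn, hbump, mul_one]

theorem towerFn_lt_of_notMem_iInter (hab : IsNestedTower a b) (hm : 1 ≤ m) (hcf : 0 < cf) {x : ℝ}
    (hx : x ∉ ⋂ k, Icc (a k) (b k)) : towerFn m cf a b x < cf * ∑' k, wSeq k ^ m := by
  obtain ⟨k, hk⟩ : ∃ k, x ∉ Icc (a k) (b k) := by simpa only [mem_iInter, not_forall] using hx
  have hle := fun j => wSeq_pow_mul_bumpOn_le m j (a j) (b j) x
  have hw := summable_wSeq_pow hm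
  have hsum : Summable fun j => wSeq j ^ m * bumpOn (a j) (b j) x :=
    .of_nonneg_of_le (fun j => wSeq_pow_mul_bumpOn_nonneg m j (a j) (b j) x) hle hw
  have hlt : wSeq k ^ m * bumpOn (a k) (b k) x < wSeq k ^ m := by
    rw [bumpOn_eq_zero (hab.left_lt_right k) hk, mul_zero]
    exact pow_pos (wSeq_pos k) m
  exact mul_lt_mul_of_pos_left (hsum.tsum_lt_tsum hle hlt hw) hcf

theorem towerFn_lt_towerFn (hab : IsNestedTower a b) (hm : 1 ≤ m) (hcf : 0 < cf) {x y : ℝ}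
    (hx : x ∈ ⋂ k, Icc (a k) (b k)) (hy : y ∉ ⋂ k, Icc (a k) (b k)) :
    towerFn m cf a b y < towerFn m cf a b x :=
  (hab.towerFn_lt_of_notMem_iInter hm hcf hy).trans_eq (hab.towerFn_of_mem_iInter hx).symm

end IsNestedTower

end Tower

theorem gFn_nonneg {f : ℝ → ℝ} {x : ℝ} (hf : 0 ≤ f x) : 0 ≤ gFn f x :=
  div_nonneg hf (by linarith)

theorem gFn_lt_gFn {f : ℝ → ℝ} {x y : ℝ} (hx : -1 < f x) (hxy : f x < f y) :
    gFn f x < gFn f y := by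
  rw [gFn, gFn, div_lt_div_iff₀ (by linarith) (by linarith)]
  linarith

theorem image_add_mul_Icc_zero_one {β : ℝ} (hβ : β < 1) :
    (fun z => β + (1 - β) * z) '' Icc 0 1 = Icc β 1 := by
  simpa [add_comm] using image_affine_Icc' (sub_pos.2 hβ) β 0 1

/-- The revenue `Rev(x) = x(1 − F(x))` earned by posting the price `x` to a buyer whose value has
distribution function `F`. -/
noncomputable def revenue (F : ℝ → ℝ) (x : ℝ) : ℝ := x * (1 - F x)

section Revenue

variable {f : ℝ → ℝ} {β x : ℝ}

theorem revenue_cdfF_of_lt (hx : x < β) : revenue (cdfF f β) x = x := by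
  simp [revenue, cdfF, hx]

theorem revenue_cdfF_of_mem_Icc (hβ : 0 < β) (hx : x ∈ Icc β 1) :
    revenue (cdfF f β) x = β + (1 - β) * gFn f ((x - β) / (1 - β)) := by
  have hx₀ : x ≠ 0 := (hβ.trans_le hx.1).ne'
  rw [revenue, cdfF, if_neg hx.1.not_gt, if_pos hx.2]
  generalize gFn f ((x - β) / (1 - β)) = G
  field_simp
  ring

theorem revenue_cdfF_of_mem_Ioc (hβ : β ≤ 1) (hx : x ∈ Ioc 1 (1 + β)) :
    revenue (cdfF f β) x = 1 + β - x := by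
  obtain ⟨hx₁, hx₂⟩ := hx
  have hx₀ : x ≠ 0 := (zero_lt_one.trans hx₁).ne'
  rw [revenue, cdfF, if_neg (hβ.trans_lt hx₁).not_gt, if_neg hx₁.not_ge, if_pos hx₂]
  field_simp
  ring

theorem revenue_cdfF_of_gt (hβ : 0 ≤ β) (hx : 1 + β < x) : revenue (cdfF f β) x = 0 := by
  rw [revenue, cdfF, if_neg (by linarith), if_neg (by linarith), if_neg hx.not_ge, sub_self,
    mul_zero]

theorem revenue_cdfF_add_mul (hβ : β ∈ Ioo 0 1) {z : ℝ} (hz : z ∈ Icc 0 1) :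
    revenue (cdfF f β) (β + (1 - β) * z) = β + (1 - β) * gFn f z := by
  have hmem : β + (1 - β) * z ∈ Icc β 1 := image_add_mul_Icc_zero_one hβ.2 ▸ mem_image_of_mem _ hz
  rw [revenue_cdfF_of_mem_Icc hβ.1 hmem, add_sub_cancel_left,
    mul_div_cancel_left₀ z (sub_pos.2 hβ.2).ne']

theorem le_revenue_cdfF (hβ : β ∈ Ioo 0 1) (hf : ∀ z ∈ Icc 0 1, 0 ≤ f z) (hx : x ∈ Icc β 1) :
    β ≤ revenue (cdfF f β) x := by
  rw [← image_add_mul_Icc_zero_one hβ.2] at hx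
  obtain ⟨z, hz, rfl⟩ := hx
  rw [revenue_cdfF_add_mul hβ hz]
  exact le_add_of_nonneg_right (mul_nonneg (sub_pos.2 hβ.2).le (gFn_nonneg (hf z hz)))

theorem revenue_cdfF_lt (hβ : β ∈ Ioo 0 1) (hx : x ∉ Icc β 1) : revenue (cdfF f β) x < β := by
  rcases lt_or_ge x β with hxβ | hβx
  · rwa [revenue_cdfF_of_lt hxβ]
  have hx₁ : 1 < x := not_le.1 fun h => hx ⟨hβx, h⟩
  rcases le_or_gt x (1 + β) with hx₂ | hx₂
  · rw [revenue_cdfF_of_mem_Ioc hβ.2.le ⟨hx₁, hx₂⟩]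
    linarith
  · rw [revenue_cdfF_of_gt hβ.1.le hx₂]
    exact hβ.1

theorem revenue_cdfF_lt_of_forall_lt (hβ : β ∈ Ioo 0 1) (hf : ∀ z ∈ Icc 0 1, 0 ≤ f z) {xstar : ℝ}
    (hxstar : xstar ∈ Icc 0 1) (hmax : ∀ z ∈ Icc 0 1, z ≠ xstar → f z < f xstar)
    (hx : x ≠ β + (1 - β) * xstar) :
    revenue (cdfF f β) x < revenue (cdfF f β) (β + (1 - β) * xstar) := by
  by_cases hxβ : x ∈ Icc β 1
  · rw [← image_add_mul_Icc_zero_one hβ.2] at hxβ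
    obtain ⟨z, hz, rfl⟩ := hxβ
    have hlt : f z < f xstar := hmax z hz (by rintro rfl; exact hx rfl)
    have hg : gFn f z < gFn f xstar := gFn_lt_gFn (by linarith [hf z hz]) hlt
    rw [revenue_cdfF_add_mul hβ hz, revenue_cdfF_add_mul hβ hxstar]
    gcongr
    exact sub_pos.2 hβ.2
  · have hmem : β + (1 - β) * xstar ∈ Icc β 1 :=
      image_add_mul_Icc_zero_one hβ.2 ▸ mem_image_of_mem _ hxstar
    exact (revenue_cdfF_lt hβ hxβ).trans_le (le_revenue_cdfF hβ hf hmem)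

end Revenue

theorem half_one_add_mul_mem_Ioo {c L : ℝ} (hc : 0 < c) (hcL : c < 1 / L) :
    (1 + c * L) / 2 ∈ Ioo 0 1 := by
  have hL : 0 < L := one_div_pos.1 (hc.trans hcL)
  have hpos : 0 < c * L := mul_pos hc hL
  have hlt : c * L < 1 := (lt_div_iff₀ hL).1 hcL
  constructor <;> linarith

theorem revenue_of_cdfF_general {f : ℝ → ℝ} {β xstar : ℝ} (hβ : β ∈ Ioo 0 1)
    (hf : ∀ z ∈ Icc 0 1, 0 ≤ f z) (hxstar : xstar ∈ Icc 0 1)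
    (hmax : ∀ z ∈ Icc 0 1, z ≠ xstar → f z < f xstar) :
    (∀ x < β, revenue (cdfF f β) x = x) ∧
    (∀ x ∈ Icc β 1, revenue (cdfF f β) x = β + (1 - β) * gFn f ((x - β) / (1 - β))) ∧
    (∀ x ∈ Ioc 1 (1 + β), revenue (cdfF f β) x = 1 + β - x) ∧
    (∀ x, 1 + β < x → revenue (cdfF f β) x = 0) ∧
    (∀ x ∈ Icc β 1, β ≤ revenue (cdfF f β) x) ∧
    (∀ y ∉ Icc β 1, revenue (cdfF f β) y < β) ∧
    (∀ y ≠ β + (1 - β) * xstar,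
      revenue (cdfF f β) y < revenue (cdfF f β) (β + (1 - β) * xstar)) :=
  ⟨fun _ => revenue_cdfF_of_lt, fun _ => revenue_cdfF_of_mem_Icc hβ.1,
    fun _ => revenue_cdfF_of_mem_Ioc hβ.2.le, fun _ => revenue_cdfF_of_gt hβ.1.le,
    fun _ => le_revenue_cdfF hβ hf, fun _ => revenue_cdfF_lt hβ,
    fun _ => revenue_cdfF_lt_of_forall_lt hβ hf hxstar hmax⟩

/-- The revenue function `Rev(x) = x(1 − F(x))` of the constructed distribution:
its piecewise form, the fact that it is at least `b` exactly on `[b,1]`, and the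
uniqueness of its maximizer `x_r* = b + (1 − b)·x*` over `[0,∞)`, where `x*` is the
unique point of `⋂_k [a_k, b_k]`. -/
theorem revenue_of_cdfF (m : ℕ) (hm : 1 ≤ m) (cf : ℝ) (hcf : 0 < cf) (hcf' : cf < 1 / L1)
    (a b : ℕ → ℝ) (hab : IsNestedTower a b)
    (β : ℝ) (hβ : β = (1 + cf * L1) / 2)
    (Rev : ℝ → ℝ) (hRev : Rev = fun x => x * (1 - cdfF (towerFn m cf a b) β x))
    (xstar : ℝ) (hxstar : (⋂ k : ℕ, Set.Icc (a k) (b k)) = {xstar}) :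
    (∀ x ∈ Set.Ico (0 : ℝ) β, Rev x = x) ∧
    (∀ x ∈ Set.Icc β 1, Rev x = β + (1 - β) * gFn (towerFn m cf a b) ((x - β) / (1 - β))) ∧
    (∀ x ∈ Set.Ioc (1 : ℝ) (1 + β), Rev x = 1 + β - x) ∧
    (∀ x : ℝ, 1 + β < x → Rev x = 0) ∧
    (∀ x ∈ Set.Icc β 1, β ≤ Rev x) ∧
    (∀ y : ℝ, 0 ≤ y → y ∉ Set.Icc β 1 → Rev y < β) ∧
    (∀ y : ℝ, 0 ≤ y → y ≠ β + (1 - β) * xstar → Rev y < Rev (β + (1 - β) * xstar)) := by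
  have hmem : xstar ∈ ⋂ k, Icc (a k) (b k) := hxstar ▸ mem_singleton xstar
  obtain ⟨hlow, hmid, hhigh, htail, hge, hlt, hmax⟩ :=
    revenue_of_cdfF_general (f := towerFn m cf a b) (hβ ▸ half_one_add_mul_mem_Ioo hcf hcf')
      (fun z _ => towerFn_nonneg hcf.le z) (hab.iInter_subset_Icc_zero_one hmem)
      fun z _ hz => hab.towerFn_lt_towerFn hm hcf hmem (hxstar ▸ hz)
  subst hRev
  exact ⟨fun x hx => hlow x hx.2, hmid, hhigh, htail, hge, fun y _ => hlt y, fun y _ => hmax y⟩
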